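/- There exists an absolute constant C > 0 such that for all integers n ≥ m ≥ 1, writing u = n/m, one has |log p_{n,m} − log ρ(u) − u·ξ(u)/(2m)| ≤ C·( u·(log(u+1))²/m² + 1/u ). -/

import Mathlib

open Real

noncomputable section

/-- Predicate characterizing the Dickman function `ρ : [0,∞) → (0,∞)`:
continuous on `[0,∞)`, positive, equal to `1` on `[0,1]`, and satisfying the
delay differential equation `t·ρ'(t) + ρ(t-1) = 0` for `t > 1`. -/
def IsDickman (ρ : ℝ → ℝ) : Prop :=
  ContinuousOn ρ (Set.Ici 0) ∧
  (∀ t : ℝ, 0 ≤ t → 0 < ρ t) ∧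
  (∀ t ∈ Set.Icc (0:ℝ) 1, ρ t = 1) ∧
  (∀ t : ℝ, 1 < t → HasDerivAt ρ (-(ρ (t - 1)) / t) t)

/-- `ξ(u)`: for `u > 1`, the unique positive solution of `e^ξ = 1 + u·ξ`; otherwise `0`. -/
def xi (u : ℝ) : ℝ :=
  open Classical in
  if h : ∃ x : ℝ, 0 < x ∧ Real.exp x = 1 + u * x then h.choose else 0

/-- `p_{n,m}`: probability that a uniformly random permutation of `{1,…,n}` is `m`-friable,
i.e. has no cycle of length greater than `m`. -/
def permProb (n m : ℕ) : ℝ :=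
  (Nat.card {σ : Equiv.Perm (Fin n) // ∀ c ∈ σ.cycleType, c ≤ m} : ℝ) /
    (Nat.factorial n : ℝ)

/-- `p_{n,m,q}`: proportion of monic polynomials of degree `n` over a finite field `F`
(of cardinality `q`) that are `m`-friable, i.e. all of whose monic irreducible factors
have degree at most `m`. -/
def polyProb (F : Type) [Field F] [Fintype F] (n m : ℕ) : ℝ :=
  (Nat.card {f : Polynomial F // f.Monic ∧ f.natDegree = n ∧
      ∀ p : Polynomial F, p.Monic → Irreducible p → p ∣ f → p.natDegree ≤ m} : ℝ) /
    (Fintype.card F : ℝ) ^ n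

/-- `F_q(z) = ∏_{deg P ≤ m} (1 - (z/q)^{deg P})⁻¹`, the product over monic irreducible
polynomials `P` over `F` of degree at most `m`. -/
def FqFun (F : Type) [Field F] [Fintype F] (m : ℕ) (z : ℝ) : ℝ :=
  ∏ᶠ p ∈ {p : Polynomial F | p.Monic ∧ Irreducible p ∧ p.natDegree ≤ m},
    (1 - (z / (Fintype.card F : ℝ)) ^ p.natDegree)⁻¹

/-- `G_q(z) = F_q(z) · exp(-∑_{i=1}^m z^i/i)`. -/
def Gq (F : Type) [Field F] [Fintype F] (m : ℕ) (z : ℝ) : ℝ :=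
  FqFun F m z * Real.exp (-(∑ i ∈ Finset.Icc 1 m, z ^ i / (i : ℝ)))

/-- The coefficients `d_{m,i}`. -/
def dcoef (m i : ℕ) : ℝ :=
  if i = m then -(1 / (m : ℝ)) * ∑ j ∈ Finset.Icc 2 m, (1 : ℝ) / (j : ℝ)
  else Real.Gamma ((i : ℝ) + (i : ℝ) / (m : ℝ)) /
    (((m : ℝ) - (i : ℝ)) * (Nat.factorial i : ℝ) * Real.Gamma (1 + (i : ℝ) / (m : ℝ)))

/-- `T(s) = ∫₀^s ((e^t - 1)/t)·((t/m)/(1 - e^{-t/m}) - 1) dt`, integrand extended by `0` at `t = 0`. -/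
def Tfun (m : ℕ) (s : ℝ) : ℝ :=
  ∫ t in (0:ℝ)..s,
    if t = 0 then 0 else
      ((Real.exp t - 1) / t) * ((t / (m : ℝ)) / (1 - Real.exp (-t / (m : ℝ))) - 1)

end

/-- the centralizer order attached to a multiset of parts -/
def zz (s : Multiset ℕ) : ℕ := s.prod * ∏ k ∈ s.toFinset, (s.count k).factorial

lemma zz_cons (j : ℕ) (t : Multiset ℕ) : zz (j ::ₘ t) = j * (t.count j + 1) * zz t := by
  unfold zz
  have h1 : ∏ k ∈ t.toFinset, (t.count k).factorial
      = ∏ k ∈ insert j t.toFinset, (t.count k).factorial := by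
    apply Finset.prod_subset (Finset.subset_insert _ _)
    intro x _ hx
    rw [Multiset.mem_toFinset] at hx
    simp [Multiset.count_eq_zero_of_notMem hx]
  rw [h1, Multiset.toFinset_cons, Multiset.prod_cons,
    ← Finset.mul_prod_erase (insert j t.toFinset) _ (Finset.mem_insert_self j _),
    ← Finset.mul_prod_erase (insert j t.toFinset) (fun k => (t.count k).factorial)
      (Finset.mem_insert_self j _)]
  rw [Multiset.count_cons_self, Nat.factorial_succ]
  have h2 : ∏ x ∈ (insert j t.toFinset).erase j, (Multiset.count x (j ::ₘ t)).factorial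
      = ∏ x ∈ (insert j t.toFinset).erase j, (Multiset.count x t).factorial := by
    apply Finset.prod_congr rfl
    intro x hx
    rw [Multiset.count_cons_of_ne (Finset.ne_of_mem_erase hx)]
  rw [h2]; ring

lemma zz_replicate (s : Multiset ℕ) (h : s.count 1 = 0) (c : ℕ) :
    zz (s + Multiset.replicate c 1) = c.factorial * zz s := by
  induction c with
  | zero => simp
  | succ c ih =>
    rw [Multiset.replicate_succ, Multiset.add_cons, zz_cons, ih, Multiset.count_add, h,
      Multiset.count_replicate_self, Nat.factorial_succ]
    ring

lemma zz_pos (s : Multiset ℕ) (h : ∀ i ∈ s, 0 < i) : 0 < zz s := by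
  unfold zz
  apply Nat.mul_pos
  · apply Nat.pos_of_ne_zero
    apply Multiset.prod_ne_zero
    intro h0; exact absurd (h 0 h0) (by simp)
  · exact Finset.prod_pos (fun k _ => Nat.factorial_pos _)

open Classical in
/-- weighted partition sum -/
noncomputable def PP (m n : ℕ) : ℝ :=
  ∑ l ∈ (Finset.univ : Finset n.Partition).filter (fun l => ∀ c ∈ l.parts, c ≤ m),
    (1 : ℝ) / zz l.parts

lemma card_partition (α : Type*) [Fintype α] [DecidableEq α] (l : (Fintype.card α).Partition) :
    (Finset.univ.filter (fun σ : Equiv.Perm α => σ.partition = l)).card * zz l.parts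
      = (Fintype.card α).factorial := by
  classical
  set f := l.parts.filter (fun n => 2 ≤ n) with hf
  have hl : l.parts = f + Multiset.replicate (Fintype.card α - f.sum) 1 := by
    have h1 : l.parts = f + l.parts.filter (fun n => ¬ 2 ≤ n) :=
      (Multiset.filter_add_not _ _).symm
    have h2 : l.parts.filter (fun n => ¬ 2 ≤ n)
        = Multiset.replicate (l.parts.filter (fun n => ¬ 2 ≤ n)).card 1 := by
      apply Multiset.eq_replicate_card.2
      intro b hb
      rw [Multiset.mem_filter] at hb
      have := l.parts_pos hb.1
      omega
    have h3 : l.parts.sum = f.sum + (l.parts.filter (fun n => ¬ 2 ≤ n)).card := by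
      conv_lhs => rw [h1, h2]
      simp
    rw [l.parts_sum] at h3
    have h4 : Fintype.card α - f.sum = (l.parts.filter (fun n => ¬ 2 ≤ n)).card := by omega
    rw [h4, ← h2]
    exact h1
  have hc : f.count 1 = 0 := by
    rw [Multiset.count_eq_zero]; intro h; rw [hf, Multiset.mem_filter] at h; omega
  have hfs : f.sum ≤ Fintype.card α := by
    have := congrArg Multiset.sum hl
    rw [l.parts_sum] at this
    simp at this; omega
  have key := Equiv.Perm.card_of_cycleType_mul_eq α f
  rw [if_pos ⟨hfs, fun a ha => (Multiset.mem_filter.1 ha).2⟩] at key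
  rw [← key]
  have hset : (Finset.univ.filter (fun σ : Equiv.Perm α => σ.partition = l))
      = Finset.univ.filter (fun σ : Equiv.Perm α => σ.cycleType = f) := by
    ext σ
    simp only [Finset.mem_filter, Finset.mem_univ, true_and]
    constructor
    · rintro rfl
      rw [hf, Equiv.Perm.filter_parts_partition_eq_cycleType]
    · intro h
      rw [Nat.Partition.ext_iff, Equiv.Perm.parts_partition, hl, h, ← Equiv.Perm.sum_cycleType, h]
  rw [hset, hl, zz_replicate _ hc]
  unfold zz
  ring

lemma permProb_eq_PP (n m : ℕ) (hm : 1 ≤ m) : permProb n m = PP m n := by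
  classical
  have hcard : Fintype.card (Fin n) = n := Fintype.card_fin n
  have main : (Nat.card {σ : Equiv.Perm (Fin n) // ∀ c ∈ σ.cycleType, c ≤ m} : ℝ)
      = (Fintype.card (Fin n)).factorial * PP m (Fintype.card (Fin n)) := by
    rw [Nat.card_eq_fintype_card, Fintype.card_subtype, PP, Finset.mul_sum]
    have hmap : ∀ σ ∈ (Finset.univ.filter (fun σ : Equiv.Perm (Fin n) =>
        ∀ c ∈ σ.cycleType, c ≤ m)), σ.partition ∈
        (Finset.univ : Finset (Fintype.card (Fin n)).Partition).filter
          (fun l => ∀ c ∈ l.parts, c ≤ m) := by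
      intro σ hσ
      simp only [Finset.mem_filter, Finset.mem_univ, true_and] at hσ ⊢
      intro c hc
      rw [Equiv.Perm.parts_partition, Multiset.mem_add] at hc
      rcases hc with hc | hc
      · exact hσ c hc
      · rw [Multiset.eq_of_mem_replicate hc]; exact hm
    rw [Finset.card_eq_sum_card_fiberwise hmap]
    push_cast
    apply Finset.sum_congr rfl
    intro l hl
    simp only [Finset.mem_filter, Finset.mem_univ, true_and] at hl
    have h1 := card_partition (Fin n) l
    have hz : (0 : ℝ) < zz l.parts := by
      exact_mod_cast zz_pos _ (fun i hi => l.parts_pos hi)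
    rw [mul_one_div, eq_div_iff hz.ne', ← h1]
    push_cast
    congr 3
    ext σ
    simp only [Finset.mem_filter, Finset.mem_univ, true_and]
    constructor
    · exact fun h => h.2
    · intro h
      refine ⟨?_, h⟩
      intro c hc
      apply hl
      rw [← h, Equiv.Perm.parts_partition, Multiset.mem_add]
      exact Or.inl hc
  unfold permProb
  rw [main, hcard]
  field_simp

lemma PP_zero (m : ℕ) : PP m 0 = 1 := by
  classical
  unfold PP
  have : (Finset.univ : Finset (Nat.Partition 0)).filter (fun l => ∀ c ∈ l.parts, c ≤ m)
      = {default} := by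
    ext l
    simp [Subsingleton.elim l default]
  rw [this]
  simp [zz]

lemma PP_erase (m n j : ℕ) (hj : 1 ≤ j) (hjm : j ≤ m) (hjn : j ≤ n) :
    ∑ l ∈ ((Finset.univ : Finset n.Partition).filter (fun l => ∀ c ∈ l.parts, c ≤ m)).filter
      (fun l => j ∈ l.parts), (1 : ℝ) / zz (l.parts.erase j) = PP m (n - j) := by
  classical
  unfold PP
  refine Finset.sum_bij' (fun l hl => (⟨l.parts.erase j, fun {i} hi =>
      l.parts_pos (Multiset.mem_of_mem_erase hi), ?_⟩ : (n - j).Partition))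
    (fun l hl => (⟨j ::ₘ l.parts, ?_, ?_⟩ : n.Partition)) ?_ ?_ ?_ ?_ ?_
  · have h := (Finset.mem_filter.1 hl).2
    have := Multiset.sum_erase h
    rw [l.parts_sum] at this
    omega
  · intro i hi
    rcases Multiset.mem_cons.1 hi with rfl | hi
    · omega
    · exact l.parts_pos hi
  · rw [Multiset.sum_cons, l.parts_sum]; omega
  · intro l hl
    simp only [Finset.mem_filter, Finset.mem_univ, true_and] at hl ⊢
    intro c hc
    exact hl.1 c (Multiset.mem_of_mem_erase hc)
  · intro l hl
    simp only [Finset.mem_filter, Finset.mem_univ, true_and] at hl ⊢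
    refine ⟨?_, Multiset.mem_cons_self _ _⟩
    intro c hc
    rcases Multiset.mem_cons.1 hc with rfl | hc
    · exact hjm
    · exact hl c hc
  · intro l hl
    simp only [Finset.mem_filter, Finset.mem_univ, true_and] at hl
    ext1
    exact Multiset.cons_erase hl.2
  · intro l hl
    ext1
    simp
  · intro l hl
    rfl

lemma PP_rec (m n : ℕ) :
    (n : ℝ) * PP m n = ∑ j ∈ (Finset.Icc 1 m).filter (fun j => j ≤ n), PP m (n - j) := by
  classical
  have h1 : ∀ j ∈ (Finset.Icc 1 m).filter (fun j => j ≤ n), PP m (n - j) =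
      ∑ l ∈ ((Finset.univ : Finset n.Partition).filter (fun l => ∀ c ∈ l.parts, c ≤ m)),
        (if j ∈ l.parts then (1 : ℝ) / zz (l.parts.erase j) else 0) := by
    intro j hj
    simp only [Finset.mem_filter, Finset.mem_Icc] at hj
    rw [← PP_erase m n j hj.1.1 hj.1.2 hj.2, Finset.sum_filter]
  rw [Finset.sum_congr rfl h1, Finset.sum_comm]
  unfold PP
  rw [Finset.mul_sum]
  apply Finset.sum_congr rfl
  intro l hl
  simp only [Finset.mem_filter, Finset.mem_univ, true_and] at hl
  have hz : (0 : ℝ) < zz l.parts := by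
    exact_mod_cast zz_pos _ (fun i hi => l.parts_pos hi)
  have h2 : ∑ j ∈ (Finset.Icc 1 m).filter (fun j => j ≤ n),
        (if j ∈ l.parts then (1 : ℝ) / zz (l.parts.erase j) else 0)
      = ∑ j ∈ l.parts.toFinset, (l.parts.count j * j : ℕ) * (1 / (zz l.parts : ℝ)) := by
    rw [← Finset.sum_filter]
    apply Finset.sum_congr
    · ext j
      simp only [Finset.mem_filter, Finset.mem_Icc, Multiset.mem_toFinset]
      constructor
      · exact fun h => h.2
      · intro h
        refine ⟨⟨⟨l.parts_pos h, hl j h⟩, ?_⟩, h⟩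
        have := Multiset.le_sum_of_mem h
        rwa [l.parts_sum] at this
    · intro j hj
      rw [Multiset.mem_toFinset] at hj
      have h3 := zz_cons j (l.parts.erase j)
      rw [Multiset.cons_erase hj, Multiset.count_erase_self] at h3
      have h4 : 0 < l.parts.count j := Multiset.count_pos.2 hj
      have h5 : l.parts.count j - 1 + 1 = l.parts.count j := by omega
      rw [h5] at h3
      have h6 : (0 : ℝ) < zz (l.parts.erase j) := by
        exact_mod_cast zz_pos _ (fun i hi => l.parts_pos (Multiset.mem_of_mem_erase hi))
      have h7 : (0 : ℝ) < l.parts.count j := by exact_mod_cast h4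
      have h8 : (0 : ℝ) < j := by exact_mod_cast l.parts_pos hj
      rw [h3]
      push_cast
      field_simp
  rw [h2, ← Finset.sum_mul]
  congr 1
  rw [← Nat.cast_sum]
  congr 1
  have := Finset.sum_multiset_count l.parts
  rw [l.parts_sum] at this
  simpa using this
/-- Dickman function extended by `1` to the negative axis -/
structure Dk (ρ : ℝ → ℝ) : Prop where
  cont : Continuous ρ
  pos : ∀ t, 0 < ρ t
  one : ∀ t, t ≤ 1 → ρ t = 1
  der : ∀ t, 1 < t → HasDerivAt ρ (-(ρ (t - 1)) / t) t

/-- minus the logarithmic derivative of `ρ` -/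
noncomputable def rr (ρ : ℝ → ℝ) (u : ℝ) : ℝ := if u < 1 then 0 else ρ (u - 1) / (u * ρ u)

lemma rr_of_ge {ρ : ℝ → ℝ} {u : ℝ} (hu : 1 ≤ u) : rr ρ u = ρ (u - 1) / (u * ρ u) := by
  simp [rr, not_lt.2 hu]

lemma rr_mul {ρ : ℝ → ℝ} (h : Dk ρ) {u : ℝ} (hu : 1 ≤ u) : rr ρ u * ρ u = ρ (u - 1) / u := by
  rw [rr_of_ge hu]
  have := h.pos u
  have : 0 < u := by linarith
  field_simp

lemma rr_pos {ρ : ℝ → ℝ} (h : Dk ρ) {u : ℝ} (hu : 1 ≤ u) : 0 < rr ρ u := by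
  rw [rr_of_ge hu]
  exact div_pos (h.pos _) (mul_pos (by linarith) (h.pos _))

lemma rr_nonneg {ρ : ℝ → ℝ} (h : Dk ρ) (u : ℝ) : 0 ≤ rr ρ u := by
  rcases lt_or_ge u 1 with hu | hu
  · simp [rr, hu]
  · exact (rr_pos h hu).le

lemma Dk.der' {ρ : ℝ → ℝ} (h : Dk ρ) {t : ℝ} (ht : 1 < t) :
    HasDerivAt ρ (-(rr ρ t * ρ t)) t := by
  rw [rr_mul h ht.le, ← neg_div]
  exact h.der t ht

lemma Dk.strictAnti {ρ : ℝ → ℝ} (h : Dk ρ) : StrictAntiOn ρ (Set.Ici 1) := by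
  apply strictAntiOn_of_deriv_neg (convex_Ici 1) h.cont.continuousOn
  intro x hx
  rw [interior_Ici] at hx
  rw [(h.der' hx).deriv]
  have := mul_pos (rr_pos h (le_of_lt hx)) (h.pos x)
  linarith

lemma Dk.anti {ρ : ℝ → ℝ} (h : Dk ρ) : Antitone ρ := by
  have h1 : AntitoneOn ρ (Set.Iic 1) := by
    intro x hx y hy _
    rw [h.one x hx, h.one y hy]
  exact h1.Iic_union_Ici h.strictAnti.antitoneOn

lemma Dk.le_one {ρ : ℝ → ℝ} (h : Dk ρ) (t : ℝ) : ρ t ≤ 1 := by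
  rcases le_total t 1 with ht | ht
  · rw [h.one t ht]
  · rw [← h.one 1 le_rfl]; exact h.anti ht

lemma Dk.hasDerivAt_int {ρ : ℝ → ℝ} (h : Dk ρ) (t : ℝ) :
    HasDerivAt (fun x => ∫ y in (0:ℝ)..x, ρ y) (ρ t) t :=
  intervalIntegral.integral_hasDerivAt_right (h.cont.intervalIntegrable _ _)
    h.cont.stronglyMeasurable.stronglyMeasurableAtFilter h.cont.continuousAt

lemma Dk.integral {ρ : ℝ → ℝ} (h : Dk ρ) {u : ℝ} (hu : 1 ≤ u) :
    ∫ y in (u-1)..u, ρ y = u * ρ u := by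
  set I : ℝ → ℝ := fun x => ∫ y in (0:ℝ)..x, ρ y with hI
  have hId := h.hasDerivAt_int
  have hIc : Continuous I := continuous_iff_continuousAt.2 fun x => (hId x).continuousAt
  have hsub : ∀ x, ∫ y in (x-1)..x, ρ y = I x - I (x - 1) := by
    intro x
    rw [hI, intervalIntegral.integral_interval_sub_left]
    <;> exact h.cont.intervalIntegrable _ _
  set G : ℝ → ℝ := fun x => x * ρ x - (I x - I (x - 1)) with hG
  have hGc : ContinuousOn G (Set.Icc 1 u) := by
    apply Continuous.continuousOn
    have := h.cont
    fun_prop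
  have hGd : ∀ x ∈ Set.Ioo 1 u, HasDerivAt G 0 x := by
    intro x hx
    have h1 : 1 < x := hx.1
    have e1 := (hasDerivAt_id x).mul (h.der x h1)
    have e2 : HasDerivAt (fun x => I (x - 1)) (ρ (x - 1)) x := by
      simpa using (hId (x-1)).comp_sub_const x 1
    have e3 := e1.sub ((hId x).sub e2)
    have e4 : (1 * ρ x + id x * (-(ρ (x - 1)) / x) - (ρ x - ρ (x - 1))) = 0 := by
      simp only [id]; field_simp; ring
    rw [e4] at e3
    exact e3
  have hG1 : G 1 = 0 := by
    have : ∫ y in (1-1:ℝ)..1, ρ y = ∫ y in (1-1:ℝ)..1, (1:ℝ) := by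
      apply intervalIntegral.integral_congr
      intro y hy
      rw [Set.uIcc_of_le (by norm_num)] at hy
      exact h.one y hy.2
    simp only [hG]
    rw [← hsub 1, this, h.one 1 le_rfl]
    norm_num
  have hGu : G u = 0 := by
    rcases eq_or_lt_of_le hu with h1 | h1
    · rw [← h1, hG1]
    · obtain ⟨c, _, hc⟩ := exists_hasDerivAt_eq_slope G (fun _ => 0) h1 hGc hGd
      have : u - 1 ≠ 0 := by linarith
      field_simp at hc
      linarith
  rw [hsub u]
  simp only [hG] at hGu
  linarith

lemma rr_continuousOn {ρ : ℝ → ℝ} (h : Dk ρ) : ContinuousOn (rr ρ) (Set.Ici 1) := by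
  have : ContinuousOn (fun u => ρ (u - 1) / (u * ρ u)) (Set.Ici 1) := by
    apply ContinuousOn.div
    · have := h.cont; fun_prop
    · have := h.cont; fun_prop
    · intro x hx
      have h1 : (1:ℝ) ≤ x := hx
      have := h.pos x
      positivity
  exact this.congr fun x hx => rr_of_ge hx

lemma rr_strictMono_12 {ρ : ℝ → ℝ} (h : Dk ρ) : StrictMonoOn (rr ρ) (Set.Icc 1 2) := by
  have hA : StrictAntiOn (fun x => x * ρ x) (Set.Icc 1 2) := by
    apply strictAntiOn_of_deriv_neg (convex_Icc 1 2)
    · have := h.cont; fun_prop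
    · intro x hx
      rw [interior_Icc] at hx
      have e1 := (hasDerivAt_id x).mul (h.der x hx.1)
      have e1' : HasDerivAt (fun x => x * ρ x) _ x := e1
      rw [e1'.deriv, h.one (x-1) (by linarith [hx.2])]
      have : ρ x < 1 := by
        rw [← h.one 1 le_rfl]
        exact h.strictAnti (Set.mem_Ici.2 le_rfl) (Set.mem_Ici.2 hx.1.le) hx.1
      have hx0 : x ≠ 0 := by linarith [hx.1]
      simp only [id]
      field_simp
      linarith
  intro x hx y hy hxy
  rw [rr_of_ge hx.1, rr_of_ge hy.1, h.one (x-1) (by linarith [hx.2]),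
    h.one (y-1) (by linarith [hy.2])]
  apply one_div_lt_one_div_of_lt
  · exact mul_pos (by linarith [hy.1]) (h.pos y)
  · exact hA hx hy hxy

lemma rr_hasDerivAt {ρ : ℝ → ℝ} (h : Dk ρ) {u : ℝ} (hu : 2 < u) :
    HasDerivAt (rr ρ) (rr ρ u * (rr ρ u - rr ρ (u - 1) - 1 / u)) u := by
  have e1 : HasDerivAt (fun x => ρ (x - 1)) (-(rr ρ (u-1) * ρ (u-1))) u := by
    simpa using (h.der' (t := u - 1) (by linarith)).comp_sub_const u 1
  have e2 := (hasDerivAt_id u).mul (h.der' (t := u) (by linarith))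
  have hp := h.pos u
  have hp1 := h.pos (u-1)
  have hu0 : 0 < u := by linarith
  have e3 := e1.div e2 (by simp only [Pi.mul_apply, id]; positivity)
  have e4 := e3.congr_of_eventuallyEq (f₁ := rr ρ) (by
    filter_upwards [eventually_gt_nhds (show (1:ℝ) < u by linarith)] with x hx
    exact rr_of_ge hx.le)
  refine e4.congr_deriv ?_
  simp only [Pi.mul_apply, id]
  rw [rr_of_ge (show (1:ℝ) ≤ u by linarith)]
  field_simp
  ring

lemma rr_gap {ρ : ℝ → ℝ} (h : Dk ρ) {u : ℝ} (hu : 2 ≤ u)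
    (hm : StrictMonoOn (rr ρ) (Set.Icc 1 u)) : 0 < rr ρ u - rr ρ (u - 1) - 1 / u := by
  set c := rr ρ (u - 1) with hc
  set I : ℝ → ℝ := fun x => ∫ y in (0:ℝ)..x, ρ y with hI
  have hId := h.hasDerivAt_int
  have hIc : Continuous I := continuous_iff_continuousAt.2 fun x => (hId x).continuousAt
  have hH : StrictMonoOn (fun t => -ρ t - c * I t) (Set.Icc (u-1) u) := by
    apply strictMonoOn_of_deriv_pos (convex_Icc _ _)
    · have := h.cont; fun_prop
    · intro x hx
      rw [interior_Icc] at hx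
      have hx1 : 1 < x := by linarith [hx.1]
      have e := (h.der' hx1).neg.sub ((hId x).const_mul c)
      have e' : HasDerivAt (fun t => -ρ t - c * I t) _ x := e
      rw [e'.deriv]
      have : c < rr ρ x := hm ⟨by linarith, by linarith⟩ ⟨hx1.le, hx.2.le⟩ hx.1
      have := mul_pos (sub_pos.2 this) (h.pos x)
      linarith
  have h1 := hH (Set.left_mem_Icc.2 (by linarith)) (Set.right_mem_Icc.2 (by linarith))
    (show u - 1 < u by linarith)
  simp only at h1
  have h2 : I u - I (u - 1) = u * ρ u := by
    rw [← h.integral (by linarith : 1 ≤ u), hI, intervalIntegral.integral_interval_sub_left]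
    <;> exact h.cont.intervalIntegrable _ _
  have h3 : c * (u * ρ u) < ρ (u-1) - ρ u := by rw [← h2]; linarith
  have hp := h.pos u
  have hu0 : 0 < u := by linarith
  rw [rr_of_ge (show (1:ℝ) ≤ u by linarith)]
  have : ρ (u - 1) / (u * ρ u) - c - 1 / u = (ρ (u-1) - ρ u - c * (u * ρ u)) / (u * ρ u) := by
    field_simp
    ring
  rw [this]
  apply div_pos _ (by positivity)
  linarith

lemma rr_strictMono {ρ : ℝ → ℝ} (h : Dk ρ) : StrictMonoOn (rr ρ) (Set.Ici 1) := by
  set g : ℝ → ℝ := fun u => rr ρ u - rr ρ (u - 1) - 1 / u with hg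
  have hgc : ContinuousOn g (Set.Ici 2) := by
    have h0 := rr_continuousOn h
    apply ContinuousOn.sub
    · apply ContinuousOn.sub
      · exact h0.mono (Set.Ici_subset_Ici.2 (by norm_num))
      · apply h0.comp (by fun_prop)
        intro x hx
        have : (2:ℝ) ≤ x := hx
        simp only [Set.mem_Ici]; linarith
    · apply ContinuousOn.div (by fun_prop) (by fun_prop)
      intro x hx
      have : (2:ℝ) ≤ x := hx
      linarith
  have step : ∀ b, 2 ≤ b → (∀ x, 2 < x → x < b → 0 < g x) →
      StrictMonoOn (rr ρ) (Set.Icc 1 b) := by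
    intro b hb hx
    have h2 : StrictMonoOn (rr ρ) (Set.Icc 2 b) := by
      apply strictMonoOn_of_deriv_pos (convex_Icc _ _)
      · exact (rr_continuousOn h).mono (fun x hx => by
          have := hx.1
          simp only [Set.mem_Ici]; linarith)
      · intro x hx'
        rw [interior_Icc] at hx'
        rw [(rr_hasDerivAt h hx'.1).deriv]
        exact mul_pos (rr_pos h (by linarith [hx'.1])) (hx x hx'.1 hx'.2)
    have := (rr_strictMono_12 h).union h2 (c := 2) (isGreatest_Icc (by norm_num))
      (isLeast_Icc hb)
    rwa [Set.Icc_union_Icc_eq_Icc (by norm_num) hb] at this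
  have hgpos : ∀ x, 2 ≤ x → 0 < g x := by
    by_contra hcon
    push Not at hcon
    set S := Set.Ici (2:ℝ) ∩ g ⁻¹' (Set.Iic 0) with hS
    have hSc : IsClosed S := hgc.preimage_isClosed_of_isClosed isClosed_Ici isClosed_Iic
    have hSn : S.Nonempty := by
      obtain ⟨x, hx, hx'⟩ := hcon
      exact ⟨x, hx, hx'⟩
    have hSb : BddBelow S := ⟨2, fun x hx => hx.1⟩
    have hmem := hSc.csInf_mem hSn hSb
    have hpos := rr_gap h hmem.1 (step _ hmem.1 (by
      intro x hx hxS
      by_contra hc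
      have : x ∈ S := ⟨hx.le, not_lt.1 hc⟩
      have := csInf_le hSb this
      linarith))
    have := hmem.2
    simp only [Set.mem_preimage, Set.mem_Iic] at this
    exact absurd hpos (not_lt.2 this)
  intro x hx y hy hxy
  have hy1 : (1:ℝ) ≤ y := hy
  exact step (y + 2) (by linarith) (fun z hz _ => hgpos z hz.le)
    ⟨hx, by linarith⟩ ⟨hy, by linarith⟩ hxy

lemma rr_mono {ρ : ℝ → ℝ} (h : Dk ρ) : Monotone (rr ρ) := by
  intro x y hxy
  rcases lt_or_ge x 1 with hx | hx
  · have : rr ρ x = 0 := by simp [rr, hx]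
    rw [this]; exact rr_nonneg h y
  · exact (rr_strictMono h).monotoneOn hx (Set.mem_Ici.2 (hx.trans hxy)) hxy

/-- tangent line inequality for `log ρ` -/
lemma Dk.tangent {ρ : ℝ → ℝ} (h : Dk ρ) (x y : ℝ) :
    ρ y ≤ ρ x * exp (-(rr ρ x * (y - x))) := by
  rcases lt_or_ge x 1 with hx | hx
  · have : rr ρ x = 0 := by simp [rr, hx]
    rw [this, h.one x hx.le]
    simpa using h.le_one y
  set c := rr ρ x with hc
  have hc0 : 0 ≤ c := rr_nonneg h x
  set f : ℝ → ℝ := fun t => ρ t * exp (c * t) with hf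
  have hfc : Continuous f := by have := h.cont; fun_prop
  have hfd : ∀ t, 1 < t → HasDerivAt f ((c - rr ρ t) * (ρ t * exp (c * t))) t := by
    intro t ht
    have e1 : HasDerivAt (fun t => exp (c * t)) (exp (c * t) * c) t := by
      simpa using ((hasDerivAt_id t).const_mul c).exp
    have e2 := (h.der' ht).mul e1
    exact e2.congr_deriv (by ring)
  have h1 : MonotoneOn f (Set.Iic 1) := by
    intro a ha b hb hab
    simp only [hf]
    rw [h.one a ha, h.one b hb]
    have := mul_le_mul_of_nonneg_left hab hc0
    simpa using this
  have h2 : MonotoneOn f (Set.Icc 1 x) := by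
    apply monotoneOn_of_deriv_nonneg (convex_Icc _ _) hfc.continuousOn
    · intro t ht
      rw [interior_Icc] at ht
      exact (hfd t ht.1).differentiableAt.differentiableWithinAt
    · intro t ht
      rw [interior_Icc] at ht
      rw [(hfd t ht.1).deriv]
      exact mul_nonneg (sub_nonneg.2 (rr_mono h ht.2.le)) (mul_pos (h.pos t) (exp_pos _)).le
  have h3 : AntitoneOn f (Set.Ici x) := by
    apply antitoneOn_of_deriv_nonpos (convex_Ici _) hfc.continuousOn
    · intro t ht
      rw [interior_Ici] at ht
      exact (hfd t (lt_of_le_of_lt hx ht)).differentiableAt.differentiableWithinAt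
    · intro t ht
      rw [interior_Ici] at ht
      rw [(hfd t (lt_of_le_of_lt hx ht)).deriv]
      exact mul_nonpos_of_nonpos_of_nonneg (sub_nonpos.2 (rr_mono h (le_of_lt ht)))
        (mul_pos (h.pos t) (exp_pos _)).le
  have key : f y ≤ f x := by
    rcases le_total y x with hyx | hyx
    · rcases le_total y 1 with hy | hy
      · exact (h1 hy (Set.mem_Iic.2 le_rfl) hy).trans (h2 ⟨le_rfl, hx⟩ ⟨hx, le_rfl⟩ hx)
      · exact h2 ⟨hy, hyx⟩ ⟨hx, le_rfl⟩ hyx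
    · exact h3 (Set.mem_Ici.2 le_rfl) (Set.mem_Ici.2 hyx) hyx
  have e : exp (-(c * (y - x))) = exp (c * x) * exp (-(c * y)) := by
    rw [← exp_add]; congr 1; ring
  rw [e, ← mul_assoc]
  have h4 : ρ y = f y * exp (-(c * y)) := by
    simp only [hf]
    rw [mul_assoc, ← exp_add]; simp
  rw [h4]
  exact mul_le_mul_of_nonneg_right key (exp_pos _).le

/-- tangent line inequality for `ρ` -/
lemma Dk.convex_tangent {ρ : ℝ → ℝ} (h : Dk ρ) {x y : ℝ} (hx : 1 ≤ x) (hy : 1 ≤ y) :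
    ρ x - ρ (x - 1) / x * (y - x) ≤ ρ y := by
  set c := ρ (x-1) / x with hc
  set f : ℝ → ℝ := fun t => ρ t + c * t with hf
  have hfc : Continuous f := by have := h.cont; fun_prop
  have hfd : ∀ t, 1 < t → HasDerivAt f (c - ρ (t - 1) / t) t := by
    intro t ht
    have e2 := (h.der t ht).add ((hasDerivAt_id t).const_mul c)
    exact e2.congr_deriv (by ring)
  have hD : ∀ a b, 1 ≤ a → a ≤ b → ρ (b - 1) / b ≤ ρ (a - 1) / a := by
    intro a b ha hab
    have h1 : ρ (b-1) ≤ ρ (a - 1) := h.anti (by linarith)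
    exact div_le_div₀ (h.pos _).le h1 (by linarith) hab
  have h2 : AntitoneOn f (Set.Icc 1 x) := by
    apply antitoneOn_of_deriv_nonpos (convex_Icc _ _) hfc.continuousOn
    · intro t ht
      rw [interior_Icc] at ht
      exact (hfd t ht.1).differentiableAt.differentiableWithinAt
    · intro t ht
      rw [interior_Icc] at ht
      rw [(hfd t ht.1).deriv]
      linarith [hD t x ht.1.le ht.2.le]
  have h3 : MonotoneOn f (Set.Ici x) := by
    apply monotoneOn_of_deriv_nonneg (convex_Ici _) hfc.continuousOn
    · intro t ht
      rw [interior_Ici] at ht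
      exact (hfd t (lt_of_le_of_lt hx ht)).differentiableAt.differentiableWithinAt
    · intro t ht
      rw [interior_Ici] at ht
      rw [(hfd t (lt_of_le_of_lt hx ht)).deriv]
      linarith [hD x t hx (le_of_lt ht)]
  have key : f x ≤ f y := by
    rcases le_total y x with hyx | hyx
    · exact h2 ⟨hy, hyx⟩ ⟨hx, le_rfl⟩ hyx
    · exact h3 (Set.mem_Ici.2 le_rfl) (Set.mem_Ici.2 hyx) hyx
  simp only [hf] at key
  linarith

lemma exp_quot {x y : ℝ} (hx : 0 < x) (hxy : x < y) : (exp x - 1) * y < (exp y - 1) * x := by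
  have hs := strictConvexOn_exp.secant_strict_mono (a := 0) (x := x) (y := y) trivial trivial
    trivial hx.ne' (by linarith) hxy
  have hy : 0 < y := by linarith
  simp only [exp_zero, sub_zero] at hs
  rwa [div_lt_div_iff₀ hx hy] at hs

lemma integral_exp_aux (c u : ℝ) (hc : c ≠ 0) :
    ∫ t in (u-1)..u, exp (c * (u - t)) = (exp c - 1) / c := by
  have hd : ∀ t ∈ Set.uIcc (u-1) u,
      HasDerivAt (fun t => -exp (c * (u - t)) / c) (exp (c * (u - t))) t := by
    intro t _
    have e1 : HasDerivAt (fun t => c * (u - t)) (c * (-1)) t :=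
      ((hasDerivAt_id t).const_sub u).const_mul c
    have e2 := (e1.exp.neg).div_const c
    refine e2.congr_deriv ?_
    field_simp
  rw [intervalIntegral.integral_eq_sub_of_hasDerivAt hd
    (Continuous.intervalIntegrable (by fun_prop) _ _)]
  simp
  field_simp
  ring

lemma rr_lower {ρ : ℝ → ℝ} (h : Dk ρ) {u : ℝ} (hu : 1 ≤ u) :
    1 + u * rr ρ u ≤ exp (rr ρ u) := by
  have hr := rr_pos h hu
  have h1 : ∫ t in (u-1)..u, ρ t ≤ ∫ t in (u-1)..u, ρ u * exp (rr ρ u * (u - t)) := by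
    apply intervalIntegral.integral_mono_on (by linarith) (h.cont.intervalIntegrable _ _)
      (Continuous.intervalIntegrable (by fun_prop) _ _)
    intro t _
    have := h.tangent u t
    rwa [show -(rr ρ u * (t - u)) = rr ρ u * (u - t) by ring] at this
  rw [h.integral hu, intervalIntegral.integral_const_mul, integral_exp_aux _ _ hr.ne',
    mul_comm u] at h1
  have h2 := le_of_mul_le_mul_left h1 (h.pos u)
  rw [le_div_iff₀ hr] at h2
  linarith

lemma rr_upper {ρ : ℝ → ℝ} (h : Dk ρ) {u : ℝ} (hu : 1 < u) :
    0 < log (u * rr ρ u) ∧ u * rr ρ u ≤ 1 + u * log (u * rr ρ u) := by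
  have hr := rr_pos h hu.le
  have hp := h.pos u
  have hp1 := h.pos (u-1)
  have hu0 : 0 < u := by linarith
  have he : u * rr ρ u = ρ (u-1) / ρ u := by
    rw [rr_of_ge hu.le]; field_simp
  have hlt : ρ u < ρ (u-1) := by
    rcases le_total (u-1) 1 with h1 | h1
    · rw [h.one _ h1, ← h.one 1 le_rfl]
      exact h.strictAnti (Set.mem_Ici.2 le_rfl) (Set.mem_Ici.2 hu.le) hu
    · exact h.strictAnti (Set.mem_Ici.2 h1) (Set.mem_Ici.2 hu.le) (by linarith)
  set s := log (u * rr ρ u) with hs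
  have hs' : s = log (ρ (u-1)) - log (ρ u) := by
    rw [hs, he, log_div hp1.ne' hp.ne']
  have hs0 : 0 < s := by
    rw [hs']; linarith [log_lt_log hp hlt]
  have hes : exp s = u * rr ρ u := exp_log (by positivity)
  refine ⟨hs0, ?_⟩
  have h1 : ∫ t in (u-1)..u, ρ u * exp (s * (u - t)) ≤ ∫ t in (u-1)..u, ρ t := by
    apply intervalIntegral.integral_mono_on (by linarith)
      (Continuous.intervalIntegrable (by fun_prop) _ _) (h.cont.intervalIntegrable _ _)
    intro t ht
    have hpt := h.pos t
    have t1 := log_le_log hp (h.tangent t u)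
    have t2 := log_le_log hp1 (h.tangent t (u-1))
    rw [log_mul hpt.ne' (exp_pos _).ne', log_exp] at t1 t2
    have hθ0 : 0 ≤ u - t := by linarith [ht.2]
    have hθ1 : 0 ≤ 1 - (u - t) := by linarith [ht.1]
    have t3 := mul_le_mul_of_nonneg_left t1 hθ1
    have t4 := mul_le_mul_of_nonneg_left t2 hθ0
    have t5 : log (ρ u * exp (s * (u-t))) ≤ log (ρ t) := by
      rw [log_mul hp.ne' (exp_pos _).ne', log_exp, hs']
      nlinarith
    exact (log_le_log_iff (by positivity) hpt).1 t5
  rw [h.integral hu.le, intervalIntegral.integral_const_mul, integral_exp_aux _ _ hs0.ne',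
    mul_comm u] at h1
  have h2 := le_of_mul_le_mul_left h1 hp
  rw [div_le_iff₀ hs0, hes] at h2
  linarith

lemma xi_spec {ρ : ℝ → ℝ} (h : Dk ρ) {u : ℝ} (hu : 1 < u) :
    0 < xi u ∧ exp (xi u) = 1 + u * xi u := by
  have hex : ∃ x : ℝ, 0 < x ∧ Real.exp x = 1 + u * x := by
    obtain ⟨hs0, hs⟩ := rr_upper h hu
    have hr := rr_pos h hu.le
    have hl := rr_lower h hu.le
    have hes : exp (log (u * rr ρ u)) = u * rr ρ u := exp_log (by positivity)
    set s := log (u * rr ρ u) with hsdef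
    have hc : ContinuousOn (fun x => exp x - 1 - u * x) (Set.uIcc s (rr ρ u)) := by fun_prop
    have := intermediate_value_uIcc hc
    have h0 : (0:ℝ) ∈ Set.uIcc (exp s - 1 - u * s) (exp (rr ρ u) - 1 - u * rr ρ u) := by
      rw [Set.mem_uIcc]; left
      constructor <;> linarith
    obtain ⟨x, hx, hx'⟩ := this h0
    refine ⟨x, ?_, by simp only at hx'; linarith⟩
    rw [Set.mem_uIcc] at hx
    rcases hx with hx | hx <;> linarith [hx.1]
  unfold xi
  rw [dif_pos hex]
  exact hex.choose_spec

lemma xi_one : xi 1 = 0 := by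
  unfold xi
  rw [dif_neg]
  rintro ⟨x, hx, hx'⟩
  have := add_one_lt_exp hx.ne'
  linarith

lemma xi_le_of {u x : ℝ} (h1 : 0 < xi u) (h2 : exp (xi u) = 1 + u * xi u) (hx : 0 < x)
    (hxu : 1 + u * x ≤ exp x) : xi u ≤ x := by
  by_contra hc
  push Not at hc
  have := exp_quot hx hc
  rw [h2] at this
  nlinarith

lemma le_xi_of {u x : ℝ} (h1 : 0 < xi u) (h2 : exp (xi u) = 1 + u * xi u) (hx : 0 < x)
    (hxu : exp x ≤ 1 + u * x) : x ≤ xi u := by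
  by_contra hc
  push Not at hc
  have := exp_quot h1 hc
  rw [h2] at this
  nlinarith

lemma rr_le_xi {ρ : ℝ → ℝ} (h : Dk ρ) {u : ℝ} (hu : 1 ≤ u) : rr ρ u ≤ xi u + 1 / u := by
  rcases eq_or_lt_of_le hu with h1 | h1
  · rw [← h1, xi_one, rr_of_ge le_rfl, h.one 1 le_rfl, h.one _ (by norm_num)]
    norm_num
  · obtain ⟨x0, x1⟩ := xi_spec h h1
    obtain ⟨hs0, hs⟩ := rr_upper h h1
    have hr := rr_pos h hu
    have hes : exp (log (u * rr ρ u)) = u * rr ρ u := exp_log (by positivity)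
    have := le_xi_of x0 x1 hs0 (by rw [hes]; exact hs)
    have h3 := exp_le_exp.2 this
    rw [hes, x1] at h3
    have hu0 : 0 < u := by linarith
    have : xi u + 1 / u = (1 + u * xi u) / u := by field_simp; ring
    rw [this, le_div_iff₀ hu0]
    linarith

lemma xi_le_rr {ρ : ℝ → ℝ} (h : Dk ρ) {u : ℝ} (hu : 1 < u) : xi u ≤ rr ρ u := by
  obtain ⟨x0, x1⟩ := xi_spec h hu
  exact xi_le_of x0 x1 (rr_pos h hu.le) (rr_lower h hu.le)

lemma xi_nonneg {ρ : ℝ → ℝ} (h : Dk ρ) {u : ℝ} (hu : 1 ≤ u) : 0 ≤ xi u := by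
  rcases eq_or_lt_of_le hu with h1 | h1
  · rw [← h1, xi_one]
  · exact (xi_spec h h1).1.le

lemma xi_le_log {ρ : ℝ → ℝ} (h : Dk ρ) {u : ℝ} (hu : 1 ≤ u) : xi u ≤ 2 * log (u + 1) := by
  have hl : 0 < log (u + 1) := log_pos (by linarith)
  rcases eq_or_lt_of_le hu with h1 | h1
  · rw [show xi u = 0 by rw [← h1, xi_one]]; positivity
  · obtain ⟨x0, x1⟩ := xi_spec h h1
    apply xi_le_of x0 x1 (by positivity)
    have e : exp (2 * log (u+1)) = (u+1)^2 := by
      rw [two_mul, exp_add, exp_log (by linarith)]; ring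
    rw [e]
    have h3 : log ((u + 1)/2) ≤ (u+1)/2 - 1 := log_le_sub_one_of_pos (by linarith)
    rw [log_div (by linarith) (by norm_num)] at h3
    have h4 : log 2 ≤ 1 := by linarith [log_two_lt_d9]
    nlinarith

lemma xi_diff {ρ : ℝ → ℝ} (h : Dk ρ) {u v : ℝ} (hv : 4 ≤ v) (hvu : v ≤ u) :
    xi u - xi v ≤ 2 * log (u / v) := by
  obtain ⟨x0, x1⟩ := xi_spec h (show 1 < v by linarith)
  obtain ⟨y0, y1⟩ := xi_spec h (show 1 < u by linarith)
  have hv0 : 0 < v := by linarith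
  have hu0 : 0 < u := by linarith
  have h2 : 2 ≤ xi v := by
    apply le_xi_of x0 x1 (by norm_num)
    have e : exp (2:ℝ) = exp 1 * exp 1 := by rw [← exp_add]; norm_num
    rw [e]
    nlinarith [exp_one_lt_d9, exp_pos 1]
  have hlog : 0 ≤ log (u / v) := log_nonneg (by rw [le_div_iff₀ hv0]; linarith)
  rcases le_total (xi u) (xi v) with hc | hc
  · linarith
  set d := xi u - xi v with hd
  have hd0 : 0 ≤ d := by linarith
  have e1 : exp d ≤ (u / v) * (xi u / xi v) := by
    rw [hd, exp_sub, x1, y1, div_mul_div_comm, div_le_div_iff₀ (by positivity) (by positivity)]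
    have : v * xi v ≤ u * xi u := mul_le_mul hvu hc x0.le hu0.le
    linarith
  have e2 := log_le_log (exp_pos _) e1
  rw [log_exp, log_mul (by positivity) (by positivity)] at e2
  have e3 : log (xi u / xi v) ≤ xi u / xi v - 1 := log_le_sub_one_of_pos (by positivity)
  have e4 : xi u / xi v - 1 = d / xi v := by rw [hd]; field_simp
  have e5 : d / xi v ≤ d / 2 := div_le_div_of_nonneg_left hd0 (by norm_num) h2
  linarith

lemma PP_rec_gt {m n : ℕ} (h : m < n) :
    (n : ℝ) * PP m n = ∑ j ∈ Finset.Icc 1 m, PP m (n - j) := by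
  rw [PP_rec]
  congr 1
  rw [Finset.filter_eq_self]
  intro j hj
  rw [Finset.mem_Icc] at hj
  omega

lemma PP_le {m : ℕ} : ∀ n : ℕ, n ≤ m → PP m n = 1 := by
  intro n
  induction n using Nat.strong_induction_on with
  | _ n ih =>
    intro hn
    rcases Nat.eq_zero_or_pos n with h0 | h0
    · rw [h0, PP_zero]
    · have h1 := PP_rec m n
      have h2 : (Finset.Icc 1 m).filter (fun j => j ≤ n) = Finset.Icc 1 n := by
        ext j; simp only [Finset.mem_filter, Finset.mem_Icc]; omega
      rw [h2, Finset.sum_congr rfl (g := fun _ => (1:ℝ)) (fun j hj => by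
        rw [Finset.mem_Icc] at hj
        exact ih (n - j) (by omega) (by omega))] at h1
      have h3 : (0:ℝ) < n := by exact_mod_cast h0
      have h4 : (n:ℝ) * PP m n = n * 1 := by simpa using h1
      exact mul_left_cancel₀ h3.ne' h4

lemma PP_lower {m N : ℕ} (f : ℕ → ℝ) (h0 : ∀ n ≤ m, f n ≤ 1)
    (h1 : ∀ n, m < n → n ≤ N → (n : ℝ) * f n ≤ ∑ j ∈ Finset.Icc 1 m, f (n - j)) :
    ∀ n ≤ N, f n ≤ PP m n := by
  intro n
  induction n using Nat.strong_induction_on with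
  | _ n ih =>
    intro hn
    rcases le_or_gt n m with h | h
    · rw [PP_le n h]; exact h0 n h
    · have h3 : (0:ℝ) < n := by exact_mod_cast (by omega : 0 < n)
      refine le_of_mul_le_mul_left ?_ h3
      rw [PP_rec_gt h]
      refine (h1 n h hn).trans (Finset.sum_le_sum fun j hj => ?_)
      rw [Finset.mem_Icc] at hj
      exact ih _ (by omega) (by omega)

lemma PP_upper {m : ℕ} (f : ℕ → ℝ) (h0 : ∀ n ≤ m, 1 ≤ f n)
    (h1 : ∀ n, m < n → ∑ j ∈ Finset.Icc 1 m, f (n - j) ≤ (n : ℝ) * f n) :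
    ∀ n, PP m n ≤ f n := by
  intro n
  induction n using Nat.strong_induction_on with
  | _ n ih =>
    rcases le_or_gt n m with h | h
    · rw [PP_le n h]; exact h0 n h
    · have h3 : (0:ℝ) < n := by exact_mod_cast (by omega : 0 < n)
      refine le_of_mul_le_mul_left ?_ h3
      rw [PP_rec_gt h]
      refine le_trans (Finset.sum_le_sum fun j hj => ?_) (h1 n h)
      rw [Finset.mem_Icc] at hj
      exact ih _ (by omega)

lemma sum_cells (W : ℝ → ℝ) (hW : Continuous W) (x a : ℝ) (m : ℕ) :
    ∑ j ∈ Finset.Icc 1 m, ∫ y in (x - j + a)..(x - j + a + 1), W y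
      = ∫ y in (x - m + a)..(x + a), W y := by
  induction m with
  | zero => simp
  | succ m ih =>
    rw [Finset.sum_Icc_succ_top (by omega), ih, add_comm,
      show x - ((m + 1 : ℕ) : ℝ) + a + 1 = x - m + a by push_cast; ring]
    exact intervalIntegral.integral_add_adjacent_intervals (hW.intervalIntegrable _ _)
      (hW.intervalIntegrable _ _)

lemma Dk.scaled {ρ : ℝ → ℝ} (h : Dk ρ) {L x a : ℝ} (hL : 0 < L) (hx : L ≤ x + a) :
    ∫ y in (x - L)..x, ρ ((y + a) / L) = (x + a) * ρ ((x + a) / L) := by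
  have h1 : 1 ≤ (x + a) / L := by rw [le_div_iff₀ hL]; linarith
  have e : ∀ y : ℝ, ρ ((y + a) / L) = ρ (y / L + a / L) := by intro y; rw [add_div]
  simp_rw [e]
  rw [intervalIntegral.integral_comp_div_add (fun y => ρ y) hL.ne']
  have e1 : (x - L) / L + a / L = (x + a) / L - 1 := by field_simp; ring
  have e2 : x / L + a / L = (x + a) / L := by field_simp
  rw [e1, e2, h.integral h1, smul_eq_mul]
  field_simp

lemma integral_lin (k A c : ℝ) :
    ∫ y in (k - 1/2)..(k - 1/2 + 1), (A + c * (y - k)) = A := by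
  have hd : ∀ t ∈ Set.uIcc (k-1/2) (k - 1/2 + 1),
      HasDerivAt (fun t => A * t + c / 2 * (t - k)^2) (A + c * (t - k)) t := by
    intro t _
    have e1 := ((hasDerivAt_id t).const_mul A).add
      (((((hasDerivAt_id t).sub_const k).pow 2)).const_mul (c/2))
    refine e1.congr_deriv ?_
    simp; ring
  rw [intervalIntegral.integral_eq_sub_of_hasDerivAt hd
    (Continuous.intervalIntegrable (by fun_prop) _ _)]
  ring

/-- crude lower bound -/
lemma PP_ge_rho {ρ : ℝ → ℝ} (h : Dk ρ) {m : ℕ} (hm : 1 ≤ m) (n : ℕ) :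
    ρ ((n : ℝ) / m) ≤ PP m n := by
  have hm0 : (0:ℝ) < m := by exact_mod_cast hm
  refine PP_lower (N := n) (fun n => ρ ((n : ℝ) / m)) (fun n _ => h.le_one _) ?_ n le_rfl
  intro n hn _
  have hnm : (m:ℝ) ≤ n := by exact_mod_cast hn.le
  have e := h.scaled (L := m) (x := n) (a := 0) hm0 (by linarith)
  simp only [add_zero] at e
  have hc : Continuous (fun y : ℝ => ρ (y / m)) := by have := h.cont; fun_prop
  have s := sum_cells (fun y => ρ (y / m)) hc n 0 m
  simp only [add_zero] at s
  rw [← e, ← s]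
  apply Finset.sum_le_sum
  intro j hj
  rw [Finset.mem_Icc] at hj
  rw [Nat.cast_sub (by omega)]
  have : ∫ y in ((n:ℝ) - j)..((n:ℝ) - j + 1), ρ (y / m)
      ≤ ∫ y in ((n:ℝ) - j)..((n:ℝ) - j + 1), ρ (((n:ℝ) - j) / m) := by
    apply intervalIntegral.integral_mono_on (by linarith) (hc.intervalIntegrable _ _)
      (Continuous.intervalIntegrable (by fun_prop) _ _)
    intro y hy
    apply h.anti
    have := hy.1
    gcongr
  simpa using this

/-- upper bound -/
lemma PP_le_rho {ρ : ℝ → ℝ} (h : Dk ρ) {m : ℕ} (n : ℕ) :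
    PP m n ≤ ρ ((n : ℝ) / (m + 1/2)) := by
  set L : ℝ := (m:ℝ) + 1/2 with hL
  have hL0 : 0 < L := by positivity
  refine PP_upper (fun n => ρ ((n : ℝ) / L)) ?_ ?_ n
  · intro k hk
    have hk' : (k:ℝ) ≤ m := by exact_mod_cast hk
    show 1 ≤ ρ ((k:ℝ) / L)
    rw [h.one]
    rw [div_le_one hL0]; linarith
  intro n hn
  have hnm : (m:ℝ) + 1 ≤ n := by exact_mod_cast hn
  have e := h.scaled (L := L) (x := n) (a := 0) hL0 (by linarith)
  simp only [add_zero] at e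
  have hc : Continuous (fun y : ℝ => ρ (y / L)) := by have := h.cont; fun_prop
  have s := sum_cells (fun y => ρ (y / L)) hc n (-1/2) m
  have hsplit : ∫ y in ((n:ℝ) - L)..n, ρ (y / L) = (∫ y in ((n:ℝ) - m + -1/2)..((n:ℝ) + -1/2), ρ (y / L))
      + ∫ y in ((n:ℝ) + -1/2)..n, ρ (y / L) := by
    rw [intervalIntegral.integral_add_adjacent_intervals (hc.intervalIntegrable _ _)
      (hc.intervalIntegrable _ _), hL]
    congr 1; ring
  have hnn : 0 ≤ ∫ y in ((n:ℝ) + -1/2)..n, ρ (y / L) :=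
    intervalIntegral.integral_nonneg (by linarith) (fun y _ => (h.pos _).le)
  show ∑ j ∈ Finset.Icc 1 m, ρ (((n - j : ℕ) : ℝ) / L) ≤ n * ρ (n / L)
  rw [← e, hsplit, ← s]
  refine le_trans ?_ (le_add_of_nonneg_right hnn)
  apply Finset.sum_le_sum
  intro j hj
  rw [Finset.mem_Icc] at hj
  have hkc : ((n - j : ℕ) : ℝ) = (n:ℝ) - j := Nat.cast_sub (by omega)
  rw [← hkc]
  generalize hk : n - j = k
  have e2 : (k:ℝ) + -1/2 = k - 1/2 := by ring
  rw [e2]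
  rcases le_or_gt k m with hkm | hkm
  · have hkm' : (k:ℝ) ≤ m := by exact_mod_cast hkm
    have : ∫ y in ((k:ℝ) - 1/2)..((k:ℝ) - 1/2 + 1), ρ (y / L)
        = ∫ y in ((k:ℝ) - 1/2)..((k:ℝ) - 1/2 + 1), (1:ℝ) := by
      apply intervalIntegral.integral_congr
      intro y hy
      rw [Set.uIcc_of_le (by linarith)] at hy
      apply h.one
      rw [div_le_one hL0]
      linarith [hy.2]
    rw [this]
    simpa using h.le_one _
  · have hkm' : (m:ℝ) + 1 ≤ k := by exact_mod_cast hkm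
    have hx : 1 ≤ (k:ℝ) / L := by rw [le_div_iff₀ hL0]; linarith
    rw [← integral_lin k (ρ ((k:ℝ)/L)) (-(ρ ((k:ℝ)/L - 1) / ((k:ℝ)/L) / L))]
    apply intervalIntegral.integral_mono_on (by linarith)
      (Continuous.intervalIntegrable (by fun_prop) _ _) (hc.intervalIntegrable _ _)
    intro y hy
    have hy1 : 1 ≤ y / L := by rw [le_div_iff₀ hL0]; linarith [hy.1]
    have := h.convex_tangent hx hy1
    refine le_trans (le_of_eq ?_) this
    rw [← sub_div]
    ring

/-- refined lower bound -/
lemma PP_ge_rho' {ρ : ℝ → ℝ} (h : Dk ρ) {m : ℕ} (hm : 1 ≤ m) (N : ℕ) (R : ℝ)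
    (hR : rr ρ (((N:ℝ) + 1) / (m + 1/2)) ≤ R) (hRm : R ≤ m) :
    ρ (((N:ℝ) + 1) / (m + 1/2)) * exp (-(R^2 / (2 * m^3) * N)) ≤ PP m N := by
  set L : ℝ := (m:ℝ) + 1/2 with hL
  have hm1 : (1:ℝ) ≤ m := by exact_mod_cast hm
  have hL0 : 0 < L := by positivity
  have hR0 : 0 ≤ R := (rr_nonneg h _).trans hR
  set lam : ℝ := R^2 / (2 * m^3) with hlam
  have hlam0 : 0 ≤ lam := by positivity
  refine PP_lower (N := N) (fun n => ρ (((n : ℝ) + 1) / L) * exp (-(lam * n))) ?_ ?_ N le_rfl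
  · intro k hk
    have h1 := h.le_one (((k : ℝ) + 1) / L)
    have h2 : exp (-(lam * k)) ≤ 1 := by
      rw [exp_le_one_iff]
      have : 0 ≤ lam * k := by positivity
      linarith
    exact mul_le_one₀ h1 (exp_pos _).le h2
  intro n hn hnN
  have hnm : (m:ℝ) + 1 ≤ n := by exact_mod_cast hn
  have hnN' : (n:ℝ) ≤ N := by exact_mod_cast hnN
  set W : ℝ → ℝ := fun y => ρ ((y + 1) / L) with hW
  have hWpos : ∀ y, 0 < W y := fun y => h.pos _
  have hWanti : Antitone W := by
    intro a b hab
    apply h.anti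
    gcongr
  have hc : Continuous W := by have := h.cont; fun_prop
  have hWt : ∀ k : ℝ, k ≤ N → ∀ _z : ℝ, ∃ c, 0 ≤ c ∧ c ≤ R / L ∧
      ∀ y, W y ≤ W k * exp (-(c * (y - k))) := by
    intro k hk _
    refine ⟨rr ρ ((k+1)/L) / L, div_nonneg (rr_nonneg h _) hL0.le, ?_, ?_⟩
    · apply div_le_div_of_nonneg_right _ hL0.le
      refine le_trans (rr_mono h ?_) hR
      gcongr
    · intro y
      have := h.tangent ((k+1)/L) ((y+1)/L)
      refine this.trans (le_of_eq ?_)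
      simp only [hW]
      congr 2
      field_simp
      ring
  have hRL : R / L ≤ R / m := by
    apply div_le_div_of_nonneg_left hR0 (by linarith) (by rw [hL]; linarith)
  have hRm1 : R / m ≤ 1 := by rw [div_le_one (by linarith)]; exact hRm
  have e := h.scaled (L := L) (x := n) (a := 1) hL0 (by linarith)
  have s := sum_cells W hc n (-1/2) m
  have hsplit : ∫ y in ((n:ℝ) - L)..n, W y = (∫ y in ((n:ℝ) - m + -1/2)..((n:ℝ) + -1/2), W y)
      + ∫ y in ((n:ℝ) + -1/2)..n, W y := by
    rw [intervalIntegral.integral_add_adjacent_intervals (hc.intervalIntegrable _ _)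
      (hc.intervalIntegrable _ _), hL]
    congr 1; ring
  have hlast : ∫ y in ((n:ℝ) + -1/2)..n, W y ≤ W n := by
    obtain ⟨c, hc0, hcR, hct⟩ := hWt n hnN' 0
    have h1 : ∫ y in ((n:ℝ) + -1/2)..n, W y ≤ ∫ y in ((n:ℝ) + -1/2)..n, 2 * W n := by
      apply intervalIntegral.integral_mono_on (by linarith) (hc.intervalIntegrable _ _)
        (Continuous.intervalIntegrable (by fun_prop) _ _)
      intro y hy
      refine (hct y).trans ?_
      have h2 : exp (-(c * (y - n))) ≤ 2 := by
        have h3 : -(c * (y - n)) ≤ 1/2 := by nlinarith [hy.1, hy.2]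
        have h4 : exp (1/2:ℝ) ≤ 2 := by
          have h5 : exp (1/2:ℝ) * exp (1/2:ℝ) = exp 1 := by rw [← exp_add]; norm_num
          nlinarith [exp_one_lt_d9, exp_pos (1/2:ℝ)]
        exact (exp_le_exp.2 h3).trans h4
      nlinarith [hWpos n]
    refine h1.trans (le_of_eq ?_)
    rw [intervalIntegral.integral_const, smul_eq_mul]
    ring
  have hcell : ∀ j ∈ Finset.Icc 1 m,
      ∫ y in ((n:ℝ) - j + -1/2)..((n:ℝ) - j + -1/2 + 1), W y
        ≤ W ((n:ℝ) - j) * (1 + (R/m)^2 / 4) := by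
    intro j hj
    set k : ℝ := (n:ℝ) - j with hk
    have hj0 : (0:ℝ) ≤ j := by positivity
    obtain ⟨c, hc0, hcR, hct⟩ := hWt k (by linarith) 0
    rw [show k + -1/2 = k - 1/2 by ring]
    rw [← integral_lin k (W k * (1 + (R/m)^2/4)) (-(W k * c))]
    apply intervalIntegral.integral_mono_on (by linarith) (hc.intervalIntegrable _ _)
      (Continuous.intervalIntegrable (by fun_prop) _ _)
    intro y hy
    refine (hct y).trans ?_
    have hy2 : |y - k| ≤ 1/2 := by rw [abs_le]; constructor <;> linarith [hy.1, hy.2]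
    have hc1 : c ≤ R / m := hcR.trans hRL
    have hcy : |c * (y - k)| ≤ (R/m) * (1/2) := by
      rw [abs_mul, abs_of_nonneg hc0]
      exact mul_le_mul hc1 hy2 (abs_nonneg _) (by positivity)
    have h6 := abs_exp_sub_one_sub_id_le (x := -(c * (y - k))) (by rw [abs_neg]; linarith)
    have h7 := (abs_le.1 h6).2
    have h8 : (c * (y-k))^2 ≤ ((R/m) * (1/2))^2 := by
      rw [← sq_abs]
      exact pow_le_pow_left₀ (abs_nonneg _) hcy 2
    have h9 : exp (-(c * (y - k))) ≤ 1 + (R/m)^2/4 - c * (y - k) := by nlinarith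
    have := mul_le_mul_of_nonneg_left h9 (hWpos k).le
    linarith
  set S := ∑ j ∈ Finset.Icc 1 m, W ((n:ℝ) - j) with hS
  have hS0 : 0 ≤ S := Finset.sum_nonneg fun j _ => (hWpos _).le
  have hmain : (n:ℝ) * W n ≤ S * (1 + (R/m)^2 / 4) := by
    have h1 := Finset.sum_le_sum hcell
    rw [s, ← Finset.sum_mul] at h1
    have h2 : ∫ y in ((n:ℝ) - L)..n, W y = (n + 1) * W n := e
    linarith
  have hcheb : (m:ℝ) / 2 * S ≤ ∑ j ∈ Finset.Icc 1 m, (j:ℝ) * W ((n:ℝ) - j) := by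
    have hmv : MonovaryOn (fun j : ℕ => (j:ℝ)) (fun j : ℕ => W ((n:ℝ) - j))
        (Finset.Icc 1 m : Finset ℕ) := by
      apply Monovary.monovaryOn
      apply Monotone.monovary
      · intro a b hab
        exact Nat.cast_le.2 hab
      · intro a b hab
        apply hWanti
        have : (a:ℝ) ≤ b := by exact_mod_cast hab
        linarith
    have h1 := hmv.sum_mul_sum_le_card_mul_sum
    rw [Nat.card_Icc, Nat.add_sub_cancel] at h1
    have h2 : ∑ j ∈ Finset.Icc 1 m, (j:ℝ) = m * (m + 1) / 2 := by
      clear * -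
      induction m with
      | zero => simp
      | succ k ih => rw [Finset.sum_Icc_succ_top (by omega), ih]; push_cast; ring
    rw [h2] at h1
    have h3 : (m:ℝ) * (m / 2 * S) ≤ m * ∑ j ∈ Finset.Icc 1 m, (j:ℝ) * W ((n:ℝ) - j) := by
      refine le_trans ?_ h1
      have : 0 ≤ (m:ℝ) * S := by positivity
      nlinarith
    exact le_of_mul_le_mul_left h3 (by linarith)
  have hfin : (n:ℝ) * W n ≤ ∑ j ∈ Finset.Icc 1 m, W ((n:ℝ) - j) * exp (lam * j) := by
    have h1 : ∑ j ∈ Finset.Icc 1 m, (W ((n:ℝ) - j) + lam * ((j:ℝ) * W ((n:ℝ) - j)))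
        ≤ ∑ j ∈ Finset.Icc 1 m, W ((n:ℝ) - j) * exp (lam * j) := by
      apply Finset.sum_le_sum
      intro j _
      have := mul_le_mul_of_nonneg_left (add_one_le_exp (lam * j)) (hWpos ((n:ℝ) - j)).le
      linarith
    rw [Finset.sum_add_distrib, ← Finset.mul_sum] at h1
    have h2 := mul_le_mul_of_nonneg_left hcheb hlam0
    have h3 : lam * ((m:ℝ) / 2 * S) = S * ((R/m)^2/4) := by
      rw [hlam]; field_simp; ring
    linarith
  have h1 := mul_le_mul_of_nonneg_right hfin (exp_pos (-(lam * n))).le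
  show (n:ℝ) * (W n * exp (-(lam * n))) ≤
    ∑ j ∈ Finset.Icc 1 m, W ((n - j : ℕ) : ℝ) * exp (-(lam * ((n - j : ℕ) : ℝ)))
  rw [← mul_assoc]
  refine h1.trans (le_of_eq ?_)
  rw [Finset.sum_mul]
  apply Finset.sum_congr rfl
  intro j hj
  rw [Finset.mem_Icc] at hj
  rw [Nat.cast_sub (by omega), mul_assoc, ← exp_add]
  congr 2
  ring

lemma IsDickman.ext {ρ : ℝ → ℝ} (h : IsDickman ρ) : Dk (fun x => ρ (max x 0)) where
  cont := by
    have := h.1.comp_continuous (f := fun x : ℝ => max x 0) (by fun_prop)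
      (fun x => Set.mem_Ici.2 (le_max_right _ _))
    exact this
  pos := fun t => h.2.1 _ (le_max_right _ _)
  one := fun t ht => h.2.2.1 _ ⟨le_max_right _ _, max_le ht zero_le_one⟩
  der := fun t ht => by
    have e := h.2.2.2 t ht
    have h1 : max (t - 1) 0 = t - 1 := max_eq_left (by linarith)
    rw [h1]
    refine e.congr_of_eventuallyEq ?_
    filter_upwards [eventually_gt_nhds (show (0:ℝ) < t by linarith)] with x hx
    rw [max_eq_left hx.le]

lemma upper_final {ρ : ℝ → ℝ} (h : Dk ρ) {n m : ℕ} (hm : 1 ≤ m) (hn : m ≤ n) (u : ℝ)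
    (hu : u = (n:ℝ) / m) (hu1 : 1 ≤ u) :
    log (PP m n) - log (ρ u) - u * xi u / (2 * m) ≤ 1 / (2 * m) := by
  have hm0 : (1:ℝ) ≤ m := by exact_mod_cast hm
  have hn0 : (n:ℝ) = u * m := by rw [hu]; field_simp
  have hp : 0 < PP m n := lt_of_lt_of_le (h.pos _) (PP_ge_rho h hm n)
  have h1 := log_le_log hp ((PP_le_rho h n).trans (h.tangent u _))
  rw [log_mul (h.pos u).ne' (exp_pos _).ne', log_exp] at h1
  have h2 : u - (n:ℝ) / (m + 1/2) = u / (2 * m + 1) := by rw [hn0]; field_simp; ring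
  have h3 : -(rr ρ u * ((n:ℝ) / (m + 1/2) - u)) = rr ρ u * (u / (2 * m + 1)) := by
    rw [← h2]; ring
  have h4 := rr_le_xi h hu1
  have h5 := xi_nonneg h hu1
  have h6 : rr ρ u * (u / (2 * m + 1)) ≤ (u * xi u + 1) / (2 * m) := by
    have : (xi u + 1 / u) * u = u * xi u + 1 := by field_simp
    calc rr ρ u * (u / (2 * m + 1)) ≤ (xi u + 1 / u) * (u / (2 * m + 1)) := by gcongr
      _ = (u * xi u + 1) / (2 * m + 1) := by rw [← this]; ring
      _ ≤ _ := by
        apply div_le_div_of_nonneg_left (by positivity) (by positivity) (by linarith)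
  rw [h3] at h1
  rw [add_div] at h6
  linarith

lemma lower_crude {ρ : ℝ → ℝ} (h : Dk ρ) {n m : ℕ} (hm : 1 ≤ m) (u : ℝ)
    (hu : u = (n:ℝ) / m) (hu1 : 1 ≤ u) :
    -(u * log (u + 1) / m) ≤ log (PP m n) - log (ρ u) - u * xi u / (2 * m) := by
  have hm0 : (1:ℝ) ≤ m := by exact_mod_cast hm
  have h0 := PP_ge_rho h hm n
  rw [← hu] at h0
  have h1 := log_le_log (h.pos u) h0
  have h2 := xi_le_log h hu1
  have h3 : u * xi u / (2 * m) ≤ u * (2 * log (u+1)) / (2 * m) := by gcongr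
  have h4 : u * (2 * log (u+1)) / (2 * m) = u * log (u+1) / m := by field_simp
  linarith

lemma lower_fine {ρ : ℝ → ℝ} (h : Dk ρ) {n m : ℕ} (hm : 1 ≤ m) (u : ℝ)
    (hu : u = (n:ℝ) / m) (hu1 : 6 ≤ u) (hR : 4 * log (u + 1) ≤ m) :
    -(8 * (u * log (u+1)^2 / m^2) + log (u+1) * u / (2 * m^2) + 2 * log (u+1) / m + u / (2 * m^2))
      ≤ log (PP m n) - log (ρ u) - u * xi u / (2 * m) := by
  have hm0 : (1:ℝ) ≤ m := by exact_mod_cast hm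
  have hn0 : (n:ℝ) = u * m := by rw [hu]; field_simp
  set l := log (u + 1) with hl
  have hl1 : 1 ≤ l := by
    rw [hl, le_log_iff_exp_le (by linarith)]; linarith [exp_one_lt_d9]
  set v : ℝ := ((n:ℝ) + 1) / (m + 1/2) with hv
  have huv : u - v = (u - 2) / (2 * m + 1) := by
    rw [hv, hn0]; field_simp; ring
  have hvu : v ≤ u := by
    have : 0 ≤ (u - 2) / (2 * m + 1) := div_nonneg (by linarith) (by linarith)
    linarith
  have hv4 : 4 ≤ v := by
    rw [hv, le_div_iff₀ (by linarith), hn0]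
    nlinarith
  have hrR : rr ρ v ≤ 4 * l := by
    have h1 := rr_mono h hvu
    have h2 := rr_le_xi h (show 1 ≤ u by linarith)
    have h3 := xi_le_log h (show 1 ≤ u by linarith)
    have h4 : 1 / u ≤ 1 := by rw [div_le_one (by linarith)]; linarith
    linarith
  have h0 := PP_ge_rho' h hm n (4 * l) hrR hR
  have hrv : 0 < ρ v := h.pos v
  have h1 := log_le_log (by positivity) h0
  rw [log_mul hrv.ne' (exp_pos _).ne', log_exp] at h1
  have e1 : (4 * l)^2 / (2 * m^3) * (n:ℝ) = 8 * (u * l^2 / m^2) := by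
    rw [hn0]; field_simp; ring
  rw [e1] at h1
  have h2 := log_le_log (h.pos u) (h.tangent v u)
  rw [log_mul hrv.ne' (exp_pos _).ne', log_exp, huv] at h2
  have h3 := xi_le_rr h (show 1 < v by linarith)
  have h4 := xi_diff h hv4 hvu
  have h5 : log (u / v) ≤ 1 / (2 * m) := by
    have hq : u / v ≤ 1 + 1 / (2 * m) := by
      rw [div_le_iff₀ (by linarith), hv, hn0]
      rw [show (1 + 1 / (2 * (m:ℝ))) * ((u * m + 1) / (m + 1/2)) = (u * m + 1) / m by
        field_simp]
      rw [le_div_iff₀ (by linarith)]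
      linarith
    have h6 := log_le_log (div_pos (by linarith) (by linarith)) hq
    have h7 := log_le_sub_one_of_pos (show 0 < 1 + 1 / (2 * (m:ℝ)) by positivity)
    linarith
  have h6 : xi u - 1 / m ≤ rr ρ v := by
    have : 1 / (m:ℝ) = 2 * (1 / (2 * m)) := by field_simp
    linarith
  have h7 : (xi u - 1 / m) * ((u - 2) / (2 * m + 1)) ≤ rr ρ v * ((u - 2) / (2 * m + 1)) :=
    mul_le_mul_of_nonneg_right h6 (div_nonneg (by linarith) (by linarith))
  have hx := xi_le_log h (show 1 ≤ u by linarith)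
  have hx0 := xi_nonneg h (show 1 ≤ u by linarith)
  have h8 : u * xi u / (2 * m) - xi u * ((u - 2) / (2 * m + 1)) ≤ l * u / (2 * m^2) + 2 * l / m := by
    have e : u * xi u / (2 * m) - xi u * ((u - 2) / (2 * m + 1))
      = xi u * (u / (2 * m * (2 * m + 1)) + 2 / (2 * m + 1)) := by field_simp; ring
    rw [e]
    have b1 : u / (2 * m * (2 * m + 1)) ≤ u / (4 * m^2) := by
      apply div_le_div_of_nonneg_left (by linarith) (by positivity) (by nlinarith)
    have b2 : 2 / (2 * (m:ℝ) + 1) ≤ 1 / m := by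
      rw [div_le_div_iff₀ (by linarith) (by linarith)]; linarith
    calc _ ≤ (2 * l) * (u / (4 * m^2) + 1 / m) := by gcongr
      _ = _ := by field_simp; ring
  have h9 : 1 / m * ((u - 2) / (2 * m + 1)) ≤ u / (2 * m^2) := by
    rw [div_mul_div_comm]
    apply div_le_div₀ (by linarith) (by linarith) (by positivity) (by nlinarith)
  linarith

/-- There exists an absolute constant `C > 0` such that for all integers
`n ≥ m ≥ 1`, writing `u = n/m`, one has
`|log p_{n,m} − log ρ(u) − u·ξ(u)/(2m)| ≤ C·(u·(log(u+1))²/m² + 1/u)`. -/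
theorem stmt0 :
    ∃ C : ℝ, 0 < C ∧ ∀ n m : ℕ, 1 ≤ m → m ≤ n → ∀ ρ : ℝ → ℝ, IsDickman ρ →
      ∀ u : ℝ, u = (n : ℝ) / (m : ℝ) →
      |Real.log (permProb n m) - Real.log (ρ u) - u * xi u / (2 * (m : ℝ))| ≤
        C * (u * (Real.log (u + 1)) ^ 2 / (m : ℝ) ^ 2 + 1 / u) := by
  refine ⟨20, by norm_num, ?_⟩
  intro n m hm hn ρ hρ u hu
  have hm0 : (1:ℝ) ≤ m := by exact_mod_cast hm
  have hmn : (m:ℝ) ≤ n := by exact_mod_cast hn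
  have hu1 : 1 ≤ u := by rw [hu, le_div_iff₀ (by linarith)]; linarith
  have h := hρ.ext
  set σ : ℝ → ℝ := fun x => ρ (max x 0) with hσ
  have hσu : ρ u = σ u := by simp only [hσ]; rw [max_eq_left (by linarith)]
  rw [hσu, permProb_eq_PP n m hm]
  set l := log (u + 1) with hl
  have hl2 : 1/2 ≤ l := by
    have : log 2 ≤ l := log_le_log (by norm_num) (by linarith)
    linarith [log_two_gt_d9]
  set A := u * l^2 / (m:ℝ)^2 with hA
  set B := 1 / u with hB
  have hA0 : 0 ≤ A := by positivity
  have hB0 : 0 ≤ B := by positivity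
  have amgm : 2 * (l / m) ≤ A + B := by
    have : A + B - 2 * (l / m) = (u * l / m - 1)^2 / u := by
      rw [hA, hB]; field_simp; ring
    have h2 : 0 ≤ (u * l / m - 1)^2 / u := by positivity
    linarith
  rw [abs_le]
  constructor
  · rcases lt_or_ge u 6 with h6 | h6
    · have h1 := lower_crude h hm u hu hu1
      have : u * l / m ≤ 6 * (l / m) := by
        rw [mul_div_assoc]
        exact mul_le_mul_of_nonneg_right h6.le (by positivity)
      rw [← hl] at h1
      linarith
    · rcases le_or_gt (4 * l) m with hR | hR
      · have h1 := lower_fine h hm u hu h6 hR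
        rw [← hl, ← hA] at h1
        have a1 : l * u / (2 * m^2) ≤ A := by
          rw [hA, div_le_div_iff₀ (by positivity) (by positivity)]
          have : 0 ≤ u * l * (m:ℝ)^2 := by positivity
          nlinarith
        have a2 : u / (2 * m^2) ≤ 2 * A := by
          have : 2 * A = (4 * l^2) * (u / (2 * m^2)) := by rw [hA]; field_simp; ring
          rw [this]
          apply le_mul_of_one_le_left (by positivity)
          nlinarith
        have a3 : 2 * l / m = 2 * (l / m) := by ring
        linarith
      · have h1 := lower_crude h hm u hu hu1
        rw [← hl] at h1
        have a1 : u * l / m ≤ 4 * A := by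
          have : 4 * A = (4 * l / m) * (u * l / m) := by rw [hA]; field_simp
          rw [this]
          apply le_mul_of_one_le_left (by positivity)
          rw [le_div_iff₀ (by linarith)]; linarith
        linarith
  · have h1 := upper_final h hm hn u hu hu1
    have a1 : 1 / (2 * (m:ℝ)) ≤ l / m := by
      rw [div_le_div_iff₀ (by linarith) (by linarith)]
      nlinarith
    linarith
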